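/- Let Γ be a planar lattice, R a coincidence reflection of Γ, and suppose w, z ∈ Γ are primitive in Γ with Rw = w and Rz = −z (so ⟨w,z⟩ = 0). Set Γ_R = ℤw + ℤz and Γ̃_R = ℤ·(w+z)/2 + ℤ·(w−z)/2. Then Γ̃_R ⊆ Γ if and only if the index [Γ : Γ_R] is even. -/

import Mathlib

/-!
A subgroup `N` of finite index in an abelian group `G` has even index iff some `u ∉ N` satisfies
`2u ∈ N` (Cauchy's theorem in `G ⧸ N`). For `N = ℤw + ℤz`, translating such a `u` by `N` gives
`2u = εw + δz` with `ε, δ ∈ {0, 1}`. If neither `w` nor `z` is divisible by `2`, then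
`ε = δ = 1`, so `w + z` is divisible by `2`. Conversely `(w + z) / 2` is such a `u`, because the
reflection fixes `w` and negates `z`, which makes them linearly independent.
-/

noncomputable section

open scoped RealInnerProductSpace

/-- The Euclidean plane. -/
abbrev EucPlane : Type := EuclideanSpace ℝ (Fin 2)

/-- A planar lattice: the additive subgroup generated by two linearly independent vectors. -/
def IsPlanarLattice (Λ : AddSubgroup EucPlane) : Prop :=
  ∃ v₁ v₂ : EucPlane, LinearIndependent ℝ ![v₁, v₂] ∧ Λ = AddSubgroup.closure {v₁, v₂}

/-- A vector `w` is primitive in `Λ` if `w ∈ Λ` and it is not a proper integral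
multiple of a lattice vector. -/
def IsPrimitiveIn (Λ : AddSubgroup EucPlane) (w : EucPlane) : Prop :=
  w ∈ Λ ∧ ∀ (m : ℤ) (u : EucPlane), u ∈ Λ → w = m • u → m = 1 ∨ m = -1

/-- The image of `Γ` under the linear isometry `R`. -/
def latticeMap (R : EucPlane ≃ₗᵢ[ℝ] EucPlane) (Γ : AddSubgroup EucPlane) :
    AddSubgroup EucPlane :=
  Γ.map (R.toLinearEquiv : EucPlane →ₗ[ℝ] EucPlane).toAddMonoidHom

/-- `R` is a coincidence reflection of `Γ`: a linear isometry of determinant `-1`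
such that `Γ ∩ RΓ` has finite index in `Γ`. -/
def IsCoincidenceReflection (Γ : AddSubgroup EucPlane) (R : EucPlane ≃ₗᵢ[ℝ] EucPlane) : Prop :=
  LinearMap.det (R.toLinearEquiv : EucPlane →ₗ[ℝ] EucPlane) = -1 ∧
    ((Γ ⊓ latticeMap R Γ).addSubgroupOf Γ).index ≠ 0

section EvenIndex

theorem prime_dvd_index_iff_exists_nsmul_mem {G : Type*} [AddGroup G] (N : AddSubgroup G)
    [N.Normal] [N.FiniteIndex] {p : ℕ} [Fact p.Prime] :
    p ∣ N.index ↔ ∃ u ∉ N, p • u ∈ N := by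
  have addOrderOf_mk_eq_iff (u : G) :
      addOrderOf (u : G ⧸ N) = p ↔ p • u ∈ N ∧ u ∉ N := by
    rw [addOrderOf_eq_prime_iff, ← QuotientAddGroup.mk_nsmul, Ne, QuotientAddGroup.eq_zero_iff,
      QuotientAddGroup.eq_zero_iff]
  constructor
  · intro hp
    obtain ⟨x, hx⟩ := exists_prime_addOrderOf_dvd_card' (G := G ⧸ N) p hp
    obtain ⟨u, rfl⟩ := QuotientAddGroup.mk_surjective x
    obtain ⟨hpu, hu⟩ := (addOrderOf_mk_eq_iff u).mp hx
    exact ⟨u, hu, hpu⟩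
  · rintro ⟨u, hu, hpu⟩
    rw [← (addOrderOf_mk_eq_iff u).mpr ⟨hpu, hu⟩]
    exact addOrderOf_dvd_natCard _

variable {G : Type*} [AddCommGroup G] {w z u : G}

theorem notMem_closure_pair_of_two_nsmul_eq_add (hwz : LinearIndependent ℤ ![w, z])
    (hu : 2 • u = w + z) : u ∉ AddSubgroup.closure {w, z} := by
  intro hmem
  obtain ⟨m, n, rfl⟩ := AddSubgroup.mem_closure_pair.mp hmem
  have relation : (2 * m - 1) • w + (2 * n - 1) • z = 0 := by
    rw [← sub_eq_zero.mpr hu]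
    module
  obtain ⟨hm, -⟩ := LinearIndependent.pair_iff.mp hwz _ _ relation
  omega

theorem even_add_of_two_nsmul_mem_closure_pair [IsAddTorsionFree G] (hw : ¬Even w) (hz : ¬Even z)
    (hu : u ∉ AddSubgroup.closure {w, z}) (h2u : 2 • u ∈ AddSubgroup.closure {w, z}) :
    Even (w + z) := by
  obtain ⟨m, n, hmn⟩ := AddSubgroup.mem_closure_pair.mp h2u
  obtain ⟨k, hk⟩ := m.even_or_odd'
  obtain ⟨l, hl⟩ := n.even_or_odd'
  set v := u - (k • w + l • z) with hv
  have two_nsmul_v : 2 • v = (m - 2 * k) • w + (n - 2 * l) • z := by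
    rw [hv, smul_sub, ← hmn]
    module
  have v_ne_zero : v ≠ 0 := fun h =>
    hu (AddSubgroup.mem_closure_pair.mpr ⟨k, l, (sub_eq_zero.mp h).symm⟩)
  rcases hk with rfl | rfl <;> rcases hl with rfl | rfl <;>
    simp only [sub_self, add_sub_cancel_left, zero_smul, one_smul, zero_add, add_zero]
      at two_nsmul_v
  · exact absurd two_nsmul_v (smul_ne_zero two_ne_zero v_ne_zero)
  · exact absurd ((even_iff_exists_two_nsmul _).mpr ⟨v, two_nsmul_v.symm⟩) hz
  · exact absurd ((even_iff_exists_two_nsmul _).mpr ⟨v, two_nsmul_v.symm⟩) hw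
  · exact (even_iff_exists_two_nsmul _).mpr ⟨v, two_nsmul_v.symm⟩

theorem even_index_closure_pair_iff_even_add [IsAddTorsionFree G]
    [(AddSubgroup.closure {w, z}).FiniteIndex] (hw : ¬Even w) (hz : ¬Even z)
    (hwz : LinearIndependent ℤ ![w, z]) :
    Even (AddSubgroup.closure {w, z}).index ↔ Even (w + z) := by
  rw [even_iff_two_dvd, prime_dvd_index_iff_exists_nsmul_mem]
  constructor
  · rintro ⟨u, hu, h2u⟩
    exact even_add_of_two_nsmul_mem_closure_pair hw hz hu h2u
  · rintro ⟨u, hu⟩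
    have h2u : 2 • u = w + z := by rw [hu, two_nsmul]
    exact ⟨u, notMem_closure_pair_of_two_nsmul_eq_add hwz h2u,
      AddSubgroup.mem_closure_pair.mpr ⟨1, 1, by rw [one_smul, one_smul, h2u]⟩⟩

end EvenIndex

theorem finrank_int_closure_le_card {M : Type*} [AddCommGroup M] (s : Finset M) :
    Module.finrank ℤ (AddSubgroup.closure (s : Set M)) ≤ s.card := by
  rw [← Submodule.span_int_eq_addSubgroupClosure]
  exact finrank_span_finset_le_card s

theorem finiteIndex_closure_range_of_linearIndependent {M ι : Type*} [AddCommGroup M]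
    [Module.Finite ℤ M] [Fintype ι] {b : ι → M} (hb : LinearIndependent ℤ b)
    (hcard : Module.finrank ℤ M ≤ Fintype.card ι) :
    (AddSubgroup.closure (Set.range b)).FiniteIndex := by
  have finrank_quotient : Module.finrank ℤ (M ⧸ Submodule.span ℤ (Set.range b)) = 0 := by
    have := (Submodule.span ℤ (Set.range b)).finrank_quotient_add_finrank
    rw [finrank_span_eq_card hb] at this
    omega
  have finite_quotient : Finite (M ⧸ Submodule.span ℤ (Set.range b)) :=
    Module.finite_of_fg_torsion _ (Module.finrank_eq_zero_iff_isTorsion.mp finrank_quotient)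
  rw [← Submodule.span_int_eq_addSubgroupClosure]
  exact @AddSubgroup.finiteIndex_of_finite_quotient _ _ _ finite_quotient

theorem linearIndependent_pair_of_map_eq_neg {R M : Type*} [CommRing R] [IsDomain R]
    [NeZero (2 : R)] [AddCommGroup M] [Module R M] [Module.IsTorsionFree R M] {f : Module.End R M}
    {w z : M} (hw0 : w ≠ 0) (hz0 : z ≠ 0) (hw : f w = w) (hz : f z = -z) :
    LinearIndependent R ![w, z] := by
  have one_ne_neg_one : (1 : R) ≠ -1 := by
    rw [Ne, eq_neg_iff_add_eq_zero, one_add_one_eq_two]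
    exact two_ne_zero
  refine Module.End.eigenvectors_linearIndependent' f ![1, -1] ?_ _ ?_
  · simpa [Function.Injective, Fin.forall_fin_two] using ⟨one_ne_neg_one, one_ne_neg_one.symm⟩
  · simp [Fin.forall_fin_two, Module.End.hasEigenvector_iff, hw0, hz0, hw, hz]

theorem closure_pair_addSubgroupOf {G : Type*} [AddGroup G] {H : AddSubgroup G} (x y : H) :
    (AddSubgroup.closure {(x : G), (y : G)}).addSubgroupOf H = AddSubgroup.closure {x, y} := by
  have image_pair : AddSubgroup.closure {(x : G), (y : G)} =
      (AddSubgroup.closure {x, y}).map H.subtype := by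
    rw [AddMonoidHom.map_closure, Set.image_pair, AddSubgroup.subtype_apply,
      AddSubgroup.subtype_apply]
  rw [image_pair, AddSubgroup.addSubgroupOf,
    AddSubgroup.comap_map_eq_self_of_injective H.subtype_injective]

section HalfSums

variable {K V : Type*} [DivisionRing K] [AddCommGroup V] [Module K V]
  {Γ : AddSubgroup V} {w z : Γ}

theorem half_smul_coe_mem_iff_even [NeZero (2 : K)] :
    ((1 : K) / 2) • (w : V) ∈ Γ ↔ Even w := by
  constructor
  · intro h
    exact ⟨⟨_, h⟩, Subtype.ext (by rw [AddSubgroup.coe_add, ← add_smul, add_halves, one_smul])⟩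
  · rintro ⟨u, rfl⟩
    rw [AddSubgroup.coe_add, smul_add, ← add_smul, add_halves, one_smul]
    exact u.2

theorem closure_half_smul_add_sub_le_iff_even_add [NeZero (2 : K)] :
    AddSubgroup.closure {((1 : K) / 2) • ((w : V) + z), ((1 : K) / 2) • ((w : V) - z)} ≤ Γ ↔
      Even (w + z) := by
  have even_sub_of_even_add (h : Even (w + z)) : Even (w - z) := by
    rw [← add_sub_add_right_eq_sub w z z]
    exact h.sub (Even.add_self z)
  rw [AddSubgroup.closure_le, Set.pair_subset_iff, SetLike.mem_coe, SetLike.mem_coe,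
    ← AddSubgroup.coe_add, ← AddSubgroup.coe_sub, half_smul_coe_mem_iff_even,
    half_smul_coe_mem_iff_even, and_iff_left_of_imp even_sub_of_even_add]

variable (K) in
theorem tilde_lattice_sub_iff_even_index_general [CharZero K]
    (hfin : (AddSubgroup.closure {w, z}).FiniteIndex) (hw : ¬Even w) (hz : ¬Even z)
    (hwz : LinearIndependent ℤ ![w, z]) :
    AddSubgroup.closure {((1 : K) / 2) • ((w : V) + z), ((1 : K) / 2) • ((w : V) - z)} ≤ Γ ↔
      Even ((AddSubgroup.closure {(w : V), (z : V)}).addSubgroupOf Γ).index := by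
  have : IsAddTorsionFree V := .of_isTorsionFree K V
  rw [closure_half_smul_add_sub_le_iff_even_add, closure_pair_addSubgroupOf,
    even_index_closure_pair_iff_even_add hw hz hwz]

end HalfSums

theorem IsPrimitiveIn.not_even {Γ : AddSubgroup EucPlane} {w : EucPlane}
    (hw : IsPrimitiveIn Γ w) : ¬Even (⟨w, hw.1⟩ : Γ) := by
  rintro ⟨u, hu⟩
  have two_zsmul_u : w = (2 : ℤ) • (u : EucPlane) := by
    rw [two_zsmul]
    exact congrArg Subtype.val hu
  rcases hw.2 2 u u.2 two_zsmul_u with h | h <;> omega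

theorem IsPrimitiveIn.ne_zero {Γ : AddSubgroup EucPlane} {w : EucPlane}
    (hw : IsPrimitiveIn Γ w) : w ≠ 0 := by
  rintro rfl
  exact hw.not_even Even.zero

theorem IsPrimitiveIn.linearIndependent_of_map_eq_neg {Γ : AddSubgroup EucPlane}
    {R : EucPlane ≃ₗᵢ[ℝ] EucPlane} {w z : EucPlane}
    (hw : IsPrimitiveIn Γ w) (hz : IsPrimitiveIn Γ z) (hRw : R w = w) (hRz : R z = -z) :
    LinearIndependent ℤ (![⟨w, hw.1⟩, ⟨z, hz.1⟩] : Fin 2 → Γ) := by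
  have over_real : LinearIndependent ℝ ![w, z] :=
    linearIndependent_pair_of_map_eq_neg (f := R.toLinearEquiv.toLinearMap)
      hw.ne_zero hz.ne_zero hRw hRz
  refine .of_comp Γ.subtype.toIntLinearMap ?_
  convert! over_real.restrict_scalars' ℤ using 1
  ext i : 1
  fin_cases i <;> rfl

theorem IsPlanarLattice.finiteIndex_closure_pair {Γ : AddSubgroup EucPlane}
    (hΓ : IsPlanarLattice Γ) {w z : Γ} (hwz : LinearIndependent ℤ ![w, z]) :
    (AddSubgroup.closure {w, z}).FiniteIndex := by
  obtain ⟨v₁, v₂, -, hv⟩ := hΓ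
  have hclosure : Γ = AddSubgroup.closure (({v₁, v₂} : Finset EucPlane) : Set EucPlane) := by
    rw [hv, Finset.coe_pair]
  have finite_Γ : Module.Finite ℤ Γ :=
    Module.Finite.iff_addGroup_fg.mpr ((AddGroup.fg_iff_addSubgroup_fg Γ).mpr ⟨_, hclosure.symm⟩)
  have finrank_le : Module.finrank ℤ Γ ≤ Fintype.card (Fin 2) := by
    rw [hclosure, Fintype.card_fin]
    exact (finrank_int_closure_le_card _).trans Finset.card_le_two
  simpa only [Matrix.range_cons, Matrix.range_empty, Set.union_empty, Set.singleton_union] using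
    finiteIndex_closure_range_of_linearIndependent hwz finrank_le

theorem tilde_lattice_sub_iff_even_index
    (Γ : AddSubgroup EucPlane) (hΓ : IsPlanarLattice Γ)
    (R : EucPlane ≃ₗᵢ[ℝ] EucPlane) (hR : IsCoincidenceReflection Γ R)
    (w z : EucPlane) (hpw : IsPrimitiveIn Γ w) (hpz : IsPrimitiveIn Γ z)
    (hRw : R w = w) (hRz : R z = -z) :
    AddSubgroup.closure {((1 : ℝ) / 2) • (w + z), ((1 : ℝ) / 2) • (w - z)} ≤ Γ ↔
      Even (((AddSubgroup.closure {w, z}).addSubgroupOf Γ).index) := by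
  have hwz := hpw.linearIndependent_of_map_eq_neg hpz hRw hRz
  simpa only using tilde_lattice_sub_iff_even_index_general ℝ (hΓ.finiteIndex_closure_pair hwz)
    hpw.not_even hpz.not_even hwz
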